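/- arXiv:1707.07303 — 2 statements merged into one kernel-verified Lean document; each statement's English description precedes it below -/
import Mathlib

section
/- Let M be a loopless matroid on the ground set E = {0,1,…,n}. Then the vector ∑_F β(M|F)·β(M/F)·e_F in ℝ^{n+1}, where the sum ranges over all flats F of M with ∅ ≠ F ≠ E, is a scalar multiple of the all-ones vector e_E. (Equivalently, the first Chern-Schwartz-MacPherson cycle csm_1(M) is a balanced fan.) -/
open Matroid Set

/-- The Möbius function of a collection of "flats" (finsets), defined recursively:
`mob flats F G = 0` if `F ⊄ G`, `1` if `F = G`, and `-∑_{F ⊆ G' ⊊ G} mob flats F G'` otherwise,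
the sum being over members `G'` of `flats`. -/
noncomputable def mob {α : Type*} [DecidableEq α] (flats : Finset (Finset α)) :
    Finset α → Finset α → ℤ
  | F, G =>
    if F ⊆ G then
      if F = G then 1
      else - ∑ G' ∈ (flats.filter fun G' => F ⊆ G' ∧ G' ⊂ G).attach,
        mob flats F G'.1
    else 0
termination_by F G => G.card
decreasing_by
  exact Finset.card_lt_card (Finset.mem_filter.mp G'.2).2.2

/-- The rank of a set `X` in a matroid `M`: the largest cardinality of an independent
subset of `X`. -/
noncomputable def rk {α : Type*} (M : Matroid α) (X : Set α) : ℕ :=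
  sSup (Set.ncard '' {I | M.Indep I ∧ I ⊆ X})

/-- An element `e` is a loop of `M` if it belongs to the ground set but to no base. -/
def mLoop {α : Type*} (M : Matroid α) (e : α) : Prop :=
  e ∈ M.E ∧ ∀ B, M.IsBase B → e ∉ B

/-- An element `e` is a coloop of `M` if it belongs to every base. -/
def mColoop {α : Type*} (M : Matroid α) (e : α) : Prop :=
  ∀ B, M.IsBase B → e ∈ B

/-- A matroid is loopless if it has no loops. -/
def mLoopless {α : Type*} (M : Matroid α) : Prop := ∀ e, ¬ mLoop M e

/-- Contraction of a set `C` in a matroid `M`, defined by duality: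
`M / C = (M✶ \ C)✶`, where deletion is restriction to the complement. -/
noncomputable def mContr {α : Type*} (M : Matroid α) (C : Set α) : Matroid α :=
  (M✶ ↾ (M✶.E \ C))✶

/-- The minor `M|G/F` of `M` obtained by restricting to `G` and contracting `F`. -/
noncomputable def mMinor {α : Type*} (M : Matroid α) (G F : Set α) : Matroid α :=
  mContr (M ↾ G) F

open Classical in
/-- The finset of all flats of a matroid on `Fin m`, as finsets. -/
noncomputable def flatsF {m : ℕ} (M : Matroid (Fin m)) : Finset (Finset (Fin m)) :=
  Finset.univ.filter fun F => M.IsFlat ↑F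

open Classical in
/-- The beta invariant `β(M) = (-1)^{r(M)} ∑_{F ∈ L(M)} μ(∅,F) r(F)` of a loopless
matroid `M`; it is `0` if `M` has a loop. -/
noncomputable def betaInv {m : ℕ} (M : Matroid (Fin m)) : ℤ :=
  if mLoopless M then
    (-1) ^ (rk M M.E) * ∑ F ∈ flatsF M, mob (flatsF M) ∅ F * (rk M ↑F : ℤ)
  else 0

/-- The 0/1 indicator vector of a finset `S ⊆ {0,…,m-1}`, as a vector in `ℝ^m`. -/
def eVec {m : ℕ} (S : Finset (Fin m)) : Fin m → ℝ := fun i => if i ∈ S then 1 else 0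

/-!
Up to sign, `β(M|F)` and `β(M/F)` are beta invariants of the intervals `[∅, F]` and `[F, E]` of the
lattice of flats. Joining with an element `i` is a closure operator on this lattice which raises the
rank of every non-closed flat by one, and the closed flats are those containing `i`. Rota's theorem,
that the Möbius function from `⊥` sums to zero over the fibres of such a closure, then gives Crapo's
formula `β(M|F) = ± ∑ μ(∅, G)`, summed over flats `i ∈ G ⊆ F`. Substituting it into the `i`-th
coordinate and applying Möbius inversion to `β(M/F)` leaves `± ∑ μ(∅, G) (r(G) - r(E))`, summed over
flats `G ∋ i`. A second use of Rota's theorem, now for the function `r ^ 2 - r`, shows that twice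
this sum does not depend on `i`.
-/

section Poset

open IncidenceAlgebra

variable {R P : Type*} [CommRing R] [PartialOrder P] [LocallyFiniteOrder P]

/-- The beta invariant of the interval `[x, y]` of a poset ranked by `r`, without the sign
`(-1) ^ (r y - r x)`. Subtracting `r x` makes it vanish on trivial intervals. -/
def intervalBeta [DecidableEq P] (r : P → R) (x y : P) : R :=
  ∑ z ∈ Finset.Icc x y, mu R x z * (r z - r x)

section OrderEmbedding

variable {Q : Type*} [PartialOrder Q] [LocallyFiniteOrder Q] (f : P ↪o Q)
  (hf : (range f).OrdConnected)

include hf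

theorem Icc_orderEmbedding (x y : P) :
    Finset.Icc (f x) (f y) = (Finset.Icc x y).map f.toEmbedding := by
  apply Finset.coe_injective
  rw [Finset.coe_map, Finset.coe_Icc, Finset.coe_Icc, ← f.preimage_Icc]
  exact (image_preimage_eq_of_subset (hf.out ⟨x, rfl⟩ ⟨y, rfl⟩)).symm

variable [DecidableEq P] [DecidableEq Q]

theorem mu_orderEmbedding (x y : P) : mu R (f x) (f y) = mu R x y := by
  induction hn : (Finset.Icc x y).card using Nat.strong_induction_on generalizing y with
  | _ n ih =>
  have hIco : Finset.Ico (f x) (f y) = (Finset.Ico x y).map f.toEmbedding := by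
    rw [← Finset.Icc_erase_right, ← Finset.Icc_erase_right, Icc_orderEmbedding f hf,
      Finset.map_erase, RelEmbedding.coe_toEmbedding]
  rw [mu_apply, mu_apply x]
  simp only [f.injective.eq_iff, hIco, Finset.sum_map, RelEmbedding.coe_toEmbedding]
  refine if_congr Iff.rfl rfl (congrArg _ (Finset.sum_congr rfl fun z hz => ih _ ?_ z rfl))
  obtain ⟨hxz, hzy⟩ := Finset.mem_Ico.1 hz
  exact hn ▸ Finset.card_lt_card (Finset.Icc_ssubset_Icc_right (hxz.trans hzy.le) le_rfl hzy)

theorem intervalBeta_orderEmbedding {r : Q → R} {s : P → R} {a : R}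
    (hrs : ∀ z, r (f z) = s z + a) (x y : P) :
    intervalBeta r (f x) (f y) = intervalBeta s x y := by
  simp only [intervalBeta, Icc_orderEmbedding f hf, Finset.sum_map, RelEmbedding.coe_toEmbedding,
    mu_orderEmbedding f hf, hrs, add_sub_add_right_eq_sub]

end OrderEmbedding

variable [DecidableEq P]

theorem sum_Icc_sum_Icc_mu_mul (g : P → R) {x t : P} (hxt : x ≤ t) :
    ∑ y ∈ Finset.Icc x t, ∑ z ∈ Finset.Icc y t, mu R y z * g z = g x := by
  calc ∑ y ∈ Finset.Icc x t, ∑ z ∈ Finset.Icc y t, mu R y z * g z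
      = ∑ z ∈ Finset.Icc x t, ∑ y ∈ Finset.Icc x z, mu R y z * g z :=
        Finset.sum_comm' fun y z => by
          simp only [Finset.mem_Icc]
          exact ⟨fun h => ⟨⟨h.1.1, h.2.1⟩, h.1.1.trans h.2.1, h.2.2⟩,
            fun h => ⟨⟨h.1.1, h.1.2.trans h.2.2⟩, h.1.2, h.2.2⟩⟩
    _ = ∑ z ∈ Finset.Icc x t, if x = z then g z else 0 := by
        simp only [← Finset.sum_mul, sum_Icc_mu_left, ite_mul, one_mul, zero_mul]
    _ = g x := by rw [Finset.sum_ite_eq, if_pos (Finset.left_mem_Icc.2 hxt)]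

theorem intervalBeta_self (r : P → R) (x : P) : intervalBeta r x x = 0 := by
  rw [intervalBeta, Finset.Icc_self, Finset.sum_singleton, sub_self, mul_zero]

theorem intervalBeta_eq_sum_sub (r : P → R) (x y : P) :
    intervalBeta r x y = ∑ z ∈ Finset.Icc x y, mu R x z * (r z - r y) := by
  have hdiff : ∑ z ∈ Finset.Icc x y, mu R x z * (r y - r x) = 0 := by
    rw [← Finset.sum_mul, sum_Icc_mu_right]
    split_ifs with hxy
    · rw [hxy, sub_self, mul_zero]
    · rw [zero_mul]
  rw [← add_zero (∑ z ∈ _, mu R x z * (r z - r y)), ← hdiff, ← Finset.sum_add_distrib]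
  exact Finset.sum_congr rfl fun z _ => by ring

theorem intervalBeta_of_ne (r : P → R) {x y : P} (hxy : x ≠ y) :
    intervalBeta r x y = ∑ z ∈ Finset.Icc x y, mu R x z * r z := by
  simp only [intervalBeta, mul_sub, Finset.sum_sub_distrib, ← Finset.sum_mul, sum_Icc_mu_right,
    if_neg hxy, zero_mul, sub_zero]

theorem sum_intervalBeta_left (r : P → R) {x t : P} (hxt : x ≤ t) :
    ∑ y ∈ Finset.Icc x t, intervalBeta r y t = r x - r t := by
  simp only [intervalBeta_eq_sum_sub]
  exact sum_Icc_sum_Icc_mu_mul (fun z => r z - r t) hxt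

section Closure

variable [OrderBot P] {c : ClosureOperator P} {y : P}

theorem sum_Iic_mu_bot (hy : y ≠ ⊥) : ∑ x ∈ Finset.Iic y, mu R ⊥ x = 0 := by
  rw [← Finset.Icc_bot, sum_Icc_mu_right, if_neg hy.symm]

/-- Rota's closure theorem. -/
theorem sum_mu_bot_closure_fiber (hbot : ¬ c.IsClosed ⊥) {y z : P} (hzy : z ≤ y) :
    ∑ x ∈ Finset.Iic y with c x = z, mu R ⊥ x = 0 := by
  induction hn : (Finset.Iic z).card using Nat.strong_induction_on generalizing y z with
  | _ n ih =>
  by_cases hz : c.IsClosed z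
  · have hfiber : {x ∈ Finset.Iic y | c x = z} = {x ∈ Finset.Iic z | c x = z} := by
      ext x
      simp only [Finset.mem_filter, Finset.mem_Iic, and_congr_left_iff]
      rintro rfl
      exact iff_of_true ((c.le_closure x).trans hzy) (c.le_closure x)
    have hsmaller : ∀ w ∈ Finset.Iic z, w ≠ z →
        ∑ x ∈ Finset.Iic z with c x = w, mu R ⊥ x = 0 := fun w hw hne =>
      have hwz := Finset.mem_Iic.1 hw
      ih _ (hn ▸ Finset.card_lt_card (Finset.Iic_ssubset_Iic.2 (hwz.lt_of_ne hne))) hwz rfl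
    calc ∑ x ∈ Finset.Iic y with c x = z, mu R ⊥ x
        = ∑ w ∈ Finset.Iic z, ∑ x ∈ Finset.Iic z with c x = w, mu R ⊥ x := by
          rw [hfiber, Finset.sum_eq_single_of_mem z (Finset.mem_Iic.2 le_rfl) hsmaller]
      _ = ∑ x ∈ Finset.Iic z, mu R ⊥ x :=
          Finset.sum_fiberwise_of_maps_to
            (fun x hx => Finset.mem_Iic.2 (c.closure_min (Finset.mem_Iic.1 hx) hz)) _
      _ = 0 := sum_Iic_mu_bot (by rintro rfl; exact hbot hz)
  · rw [Finset.filter_false_of_mem, Finset.sum_empty]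
    rintro x - rfl
    exact hz (c.isClosed_closure x)

theorem sum_mu_bot_mul_closure (hbot : ¬ c.IsClosed ⊥) (hy : c.IsClosed y) (g : P → R) :
    ∑ x ∈ Finset.Iic y, mu R ⊥ x * g (c x) = 0 := by
  rw [← Finset.sum_fiberwise_of_maps_to (t := Finset.Iic y)
    fun x hx => Finset.mem_Iic.2 (c.closure_min (Finset.mem_Iic.1 hx) hy)]
  refine Finset.sum_eq_zero fun z hz => ?_
  rw [← zero_mul (g z), ← sum_mu_bot_closure_fiber (R := R) hbot (Finset.mem_Iic.1 hz),
    Finset.sum_mul]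
  exact Finset.sum_congr rfl fun x hx => by rw [(Finset.mem_filter.1 hx).2]

variable [DecidablePred c.IsClosed] {r : P → R}

/-- Crapo's formula, with the atom replaced by a closure operator. -/
theorem intervalBeta_bot_eq_sum_isClosed (hbot : ¬ c.IsClosed ⊥) (hy : c.IsClosed y)
    (hr : ∀ x, ¬ c.IsClosed x → r (c x) = r x + 1) :
    intervalBeta r ⊥ y = ∑ x ∈ Finset.Iic y with c.IsClosed x, mu R ⊥ x := by
  have hne : y ≠ ⊥ := by rintro rfl; exact hbot hy
  have hterm : ∀ x, mu R ⊥ x * r (c x) =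
      mu R ⊥ x * r x + mu R ⊥ x - if c.IsClosed x then mu R ⊥ x else 0 := by
    intro x
    split_ifs with hx
    · rw [hx.closure_eq]; ring
    · rw [hr x hx]; ring
  have hsum := sum_mu_bot_mul_closure hbot hy r
  simp only [hterm, Finset.sum_sub_distrib, Finset.sum_add_distrib, sum_Iic_mu_bot hne, add_zero,
    ← Finset.sum_filter] at hsum
  rw [intervalBeta_of_ne r hne.symm, Finset.Icc_bot]
  exact sub_eq_zero.1 hsum

theorem two_mul_sum_isClosed_mu_bot_mul (hbot : ¬ c.IsClosed ⊥) (hy : c.IsClosed y)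
    (hr : ∀ x, ¬ c.IsClosed x → r (c x) = r x + 1) :
    2 * ∑ x ∈ Finset.Iic y with c.IsClosed x, mu R ⊥ x * r x =
      ∑ x ∈ Finset.Iic y, mu R ⊥ x * (r x ^ 2 + r x) := by
  -- `z ^ 2 - z` takes the value `z ^ 2 + z` at `z + 1`, so only closed elements contribute errors.
  have hterm : ∀ x, mu R ⊥ x * (r (c x) ^ 2 - r (c x)) =
      mu R ⊥ x * (r x ^ 2 + r x) - 2 * if c.IsClosed x then mu R ⊥ x * r x else 0 := by
    intro x
    split_ifs with hx
    · rw [hx.closure_eq]; ring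
    · rw [hr x hx]; ring
  have hsum := sum_mu_bot_mul_closure hbot hy fun z => r z ^ 2 - r z
  simp only [hterm, Finset.sum_sub_distrib, ← Finset.mul_sum, ← Finset.sum_filter] at hsum
  exact (sub_eq_zero.1 hsum).symm

theorem sum_isClosed_intervalBeta_mul_intervalBeta (hbot : ¬ c.IsClosed ⊥)
    (hup : IsUpperSet {x | c.IsClosed x}) (hr : ∀ x, ¬ c.IsClosed x → r (c x) = r x + 1) (t : P) :
    ∑ y ∈ Finset.Iic t with c.IsClosed y, intervalBeta r ⊥ y * intervalBeta r y t =
      ∑ x ∈ Finset.Iic t with c.IsClosed x, mu R ⊥ x * (r x - r t) := by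
  calc ∑ y ∈ Finset.Iic t with c.IsClosed y, intervalBeta r ⊥ y * intervalBeta r y t
      = ∑ y ∈ Finset.Iic t with c.IsClosed y, ∑ x ∈ Finset.Iic y with c.IsClosed x,
          mu R ⊥ x * intervalBeta r y t := by
        refine Finset.sum_congr rfl fun y hy => ?_
        rw [intervalBeta_bot_eq_sum_isClosed hbot (Finset.mem_filter.1 hy).2 hr, Finset.sum_mul]
    _ = ∑ x ∈ Finset.Iic t with c.IsClosed x, ∑ y ∈ Finset.Icc x t,
          mu R ⊥ x * intervalBeta r y t := by
        refine Finset.sum_comm' fun y x => ?_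
        simp only [Finset.mem_filter, Finset.mem_Iic, Finset.mem_Icc]
        exact ⟨fun h => ⟨⟨h.2.1, h.1.1⟩, h.2.1.trans h.1.1, h.2.2⟩,
          fun h => ⟨⟨h.1.2, hup h.1.1 h.2.2⟩, h.1.1, h.2.2⟩⟩
    _ = ∑ x ∈ Finset.Iic t with c.IsClosed x, mu R ⊥ x * (r x - r t) := by
        refine Finset.sum_congr rfl fun x hx => ?_
        rw [← Finset.mul_sum, sum_intervalBeta_left r (Finset.mem_Iic.1 (Finset.mem_filter.1 hx).1)]

theorem two_mul_sum_isClosed_intervalBeta_mul_intervalBeta (hbot : ¬ c.IsClosed ⊥)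
    (hup : IsUpperSet {x | c.IsClosed x}) (hr : ∀ x, ¬ c.IsClosed x → r (c x) = r x + 1)
    {t : P} (ht : c.IsClosed t) :
    2 * ∑ y ∈ Finset.Iic t with c.IsClosed y, intervalBeta r ⊥ y * intervalBeta r y t =
      ∑ x ∈ Finset.Iic t, mu R ⊥ x * (r x ^ 2 + r x) - 2 * (intervalBeta r ⊥ t * r t) := by
  rw [sum_isClosed_intervalBeta_mul_intervalBeta hbot hup hr,
    ← two_mul_sum_isClosed_mu_bot_mul hbot ht hr, intervalBeta_bot_eq_sum_isClosed hbot ht hr,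
    Finset.sum_mul, ← mul_sub, ← Finset.sum_sub_distrib]
  simp only [mul_sub]

end Closure

end Poset

theorem mob_eq_mu {α : Type*} [DecidableEq α] (L : Finset (Finset α)) (F G : L) :
    mob L F G = IncidenceAlgebra.mu ℤ F G := by
  induction hn : (G : Finset α).card using Nat.strong_induction_on generalizing G with
  | _ n ih =>
  have hIco : {K ∈ L | (F : Finset α) ⊆ K ∧ K ⊂ G} =
      (Finset.Ico F G).map (Function.Embedding.subtype (· ∈ L)) := by
    ext K
    simp only [Finset.mem_filter, Finset.mem_map, Finset.mem_Ico, Function.Embedding.subtype_apply]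
    constructor
    · rintro ⟨hK, hFK, hKG⟩
      exact ⟨⟨K, hK⟩, ⟨hFK, hKG⟩, rfl⟩
    · rintro ⟨K, ⟨hFK, hKG⟩, rfl⟩
      exact ⟨K.2, hFK, hKG⟩
  rw [mob, IncidenceAlgebra.mu_apply, Finset.sum_attach _ (mob L F), hIco, Finset.sum_map]
  simp only [Subtype.coe_inj]
  split_ifs with hFG hne hne
  · rfl
  · refine congrArg _ (Finset.sum_congr rfl fun K hK => ih _ ?_ K rfl)
    exact hn ▸ Finset.card_lt_card (Finset.mem_Ico.1 hK).2
  · exact absurd (hne ▸ subset_rfl) hFG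
  · rw [Finset.Ico_eq_empty fun h : F < G => hFG h.le, Finset.sum_empty, neg_zero]

section Matroid

variable {α : Type*} {M : Matroid α} {F G H : Set α}

theorem cast_rk_eq_eRk (M : Matroid α) [M.RankFinite] (X : Set α) : (rk M X : ℕ∞) = M.eRk X := by
  obtain ⟨I, hI⟩ := M.exists_isBasis' X
  have hrk : rk M X = I.ncard := by
    refine IsGreatest.csSup_eq ⟨⟨I, ⟨hI.indep, hI.subset⟩, rfl⟩, ?_⟩
    rintro _ ⟨J, ⟨hJ, hJX⟩, rfl⟩
    have hJI := hJ.encard_le_eRk_of_subset hJX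
    rw [hI.eRk_eq_encard, ← hJ.finite.cast_ncard_eq, ← hI.indep.finite.cast_ncard_eq] at hJI
    exact_mod_cast hJI
  rw [hrk, hI.indep.finite.cast_ncard_eq, hI.encard_eq_eRk]

theorem eRk_contract_add_eRk (M : Matroid α) (C X : Set α) :
    (M ／ C).eRk X + M.eRk C = M.eRk (X ∪ C) := by
  obtain ⟨I, hI⟩ := M.exists_isBasis' C
  obtain ⟨J, hJ, hIJ⟩ :=
    hI.indep.subset_isBasis'_of_subset (hI.subset.trans (subset_union_right (s := X)))
  have hJC : J ∩ C = I := (hI.eq_of_subset_indep (hJ.indep.inter_right C)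
    (subset_inter hIJ hI.subset) inter_subset_right).symm
  have hJdiff : (M ／ C).IsBasis' (J \ C) ((X ∪ C) \ C) :=
    hJ.contract_isBasis' hI (hJ.indep.subset (union_subset sdiff_subset hIJ))
  have hX : (M ／ C).eRk X = (M ／ C).eRk ((X ∪ C) \ C) := by
    rw [← eRk_inter_ground, ← eRk_inter_ground _ (_ \ C), contract_ground, union_sdiff_right]
    congr 1
    tauto_set
  rw [hX, hJdiff.eRk_eq_encard, hI.eRk_eq_encard, hJ.eRk_eq_encard, ← hJC,
    encard_sdiff_add_encard_inter]

theorem rk_mMinor_add_rk [M.RankFinite] (h : H ∪ F ⊆ G) :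
    rk (mMinor M G F) H + rk M F = rk M (H ∪ F) := by
  have heRk := eRk_contract_add_eRk (M ↾ G) F H
  rw [restrict_eRk_eq M h, restrict_eRk_eq M (subset_union_right.trans h), ← cast_rk_eq_eRk,
    ← cast_rk_eq_eRk, ← cast_rk_eq_eRk] at heRk
  exact_mod_cast heRk

theorem rk_closure_insert [M.RankFinite] {e : α} (hF : M.IsFlat F) (he : e ∈ M.E) (heF : e ∉ F) :
    rk M (M.closure (insert e F)) = rk M F + 1 := by
  have heRk : M.eRk (M.closure (insert e F)) = M.eRk F + 1 := by
    rw [M.eRk_closure_eq, M.eRk_insert_eq_add_one ⟨he, by rwa [hF.closure]⟩]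
  rw [← cast_rk_eq_eRk, ← cast_rk_eq_eRk] at heRk
  exact_mod_cast heRk

theorem mLoop_iff_isLoop {e : α} : mLoop M e ↔ M.IsLoop e := by
  rw [isLoop_iff_forall_mem_compl_isBase, mLoop]
  refine ⟨fun h B hB => ⟨h.1, h.2 B hB⟩, fun h => ?_⟩
  obtain ⟨B, hB⟩ := M.exists_isBase
  exact ⟨(h B hB).1, fun B hB => (h B hB).2⟩

theorem mLoopless_iff_loops_eq_empty : mLoopless M ↔ M.loops = ∅ := by
  simp only [mLoopless, mLoop_iff_isLoop, isLoop_iff, eq_empty_iff_forall_notMem]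

theorem isFlat_restrict_iff (hG : M.IsFlat G) : (M ↾ G).IsFlat H ↔ M.IsFlat H ∧ H ⊆ G := by
  have hclosure (hHG : H ⊆ G) : (M ↾ G).closure H = M.closure H := by
    rw [M.restrict_closure_eq hHG hG.subset_ground, inter_eq_left, ← hG.closure]
    exact M.closure_subset_closure hHG
  constructor
  · intro hH
    have hHG : H ⊆ G := hH.subset_ground
    exact ⟨isFlat_iff_closure_eq.2 ((hclosure hHG).symm.trans hH.closure), hHG⟩
  · rintro ⟨hH, hHG⟩
    exact isFlat_iff_closure_eq.2 ((hclosure hHG).trans hH.closure)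

theorem isFlat_contract_iff {C : Set α} (hC : C ⊆ M.E) :
    (M ／ C).IsFlat H ↔ M.IsFlat (H ∪ C) ∧ Disjoint H C := by
  simp only [isFlat_iff_closure_eq, contract_closure_eq]
  constructor
  · intro hH
    have hsub : C ⊆ M.closure (H ∪ C) :=
      (M.subset_closure C).trans (M.closure_subset_closure subset_union_right)
    refine ⟨?_, hH ▸ disjoint_sdiff_left⟩
    conv_rhs => rw [← hH, sdiff_union_of_subset hsub]
  · rintro ⟨hH, hdisj⟩
    rw [hH, union_sdiff_right, hdisj.sdiff_eq_left]

theorem isFlat_mMinor_iff (hG : M.IsFlat G) (hFG : F ⊆ G) :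
    (mMinor M G F).IsFlat H ↔ (M.IsFlat (H ∪ F) ∧ H ∪ F ⊆ G) ∧ Disjoint H F := by
  rw [← isFlat_restrict_iff hG]
  exact isFlat_contract_iff hFG

theorem mLoopless_mMinor (hG : M.IsFlat G) (hF : M.IsFlat F) (hFG : F ⊆ G) :
    mLoopless (mMinor M G F) := by
  have hF' : (M ↾ G).IsFlat F := (isFlat_restrict_iff hG).2 ⟨hF, hFG⟩
  rw [mLoopless_iff_loops_eq_empty]
  exact (contract_loops_eq _ F).trans (by rw [hF'.closure, sdiff_self])

end Matroid

section Flats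

variable {m : ℕ} {M : Matroid (Fin m)}

theorem mem_flatsF {F : Finset (Fin m)} : F ∈ flatsF M ↔ M.IsFlat ↑F := by
  simp only [flatsF, Finset.mem_filter, Finset.mem_univ, true_and]

theorem isFlat_coe (F : flatsF M) : M.IsFlat ↑F.1 := mem_flatsF.1 F.2

/-- The closure of a set of elements, as an element of the lattice of flats. -/
noncomputable def flatClosure (M : Matroid (Fin m)) (X : Set (Fin m)) : flatsF M :=
  ⟨(M.closure X).toFinite.toFinset, mem_flatsF.2 (by simp)⟩

theorem coe_flatClosure (X : Set (Fin m)) : ((flatClosure M X).1 : Set (Fin m)) = M.closure X :=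
  Set.Finite.coe_toFinset _

theorem flatClosure_le {X : Set (Fin m)} {F : flatsF M} (h : X ⊆ ↑F.1) : flatClosure M X ≤ F := by
  rw [← Subtype.coe_le_coe, ← Finset.coe_subset, coe_flatClosure,
    ← (isFlat_coe F).closure]
  exact M.closure_subset_closure h

noncomputable instance : BoundedOrder (flatsF M) where
  top := flatClosure M M.E
  le_top F := by
    rw [← Subtype.coe_le_coe, ← Finset.coe_subset, coe_flatClosure,
      closure_ground]
    exact (isFlat_coe F).subset_ground
  bot := flatClosure M ∅
  bot_le _ := flatClosure_le (empty_subset _)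

theorem coe_top_flatsF : (((⊤ : flatsF M) : Finset (Fin m)) : Set (Fin m)) = M.E :=
  (coe_flatClosure _).trans M.closure_ground

theorem coe_bot_flatsF (hM : mLoopless M) : ((⊥ : flatsF M) : Finset (Fin m)) = ∅ := by
  rw [← Finset.coe_eq_empty]
  exact (coe_flatClosure _).trans (mLoopless_iff_loops_eq_empty.1 hM)

/-- The rank function of the lattice of flats. -/
noncomputable def flatRank (M : Matroid (Fin m)) (F : flatsF M) : ℤ := rk M ↑F.1

theorem flatRank_bot (hM : mLoopless M) : flatRank M ⊥ = 0 := by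
  have hrk := cast_rk_eq_eRk M ∅
  rw [eRk_empty] at hrk
  rw [flatRank, coe_bot_flatsF hM, Finset.coe_empty]
  exact_mod_cast hrk

theorem betaInv_eq_intervalBeta (hM : mLoopless M) :
    betaInv M = (-1) ^ rk M M.E * intervalBeta (flatRank M) ⊥ ⊤ := by
  rw [betaInv, if_pos hM, intervalBeta, flatRank_bot hM, Finset.Icc_bot_top, ← Finset.sum_coe_sort,
    ← coe_bot_flatsF hM]
  simp only [mob_eq_mu, sub_zero, flatRank]

/-- The lattice of flats of `M|G/F`, seen as the interval `[F, G]` in the lattice of flats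
of `M`. -/
noncomputable def minorFlatsEmbedding {F G : flatsF M} (hFG : F ≤ G) :
    flatsF (mMinor M ↑G.1 ↑F.1) ↪o flatsF M :=
  have hiff {H : Finset (Fin m)} := isFlat_mMinor_iff (H := H) (isFlat_coe G)
    (Finset.coe_subset.2 hFG)
  OrderEmbedding.ofMapLEIff
    (fun H => ⟨H.1 ∪ F.1, mem_flatsF.2 (by simpa using (hiff.1 (isFlat_coe H)).1.1)⟩)
    fun H K => by
      have hdisj : Disjoint H.1 F.1 := Finset.disjoint_coe.1 (hiff.1 (isFlat_coe H)).2
      refine ⟨fun h => ?_, fun h => Finset.union_subset_union_left h⟩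
      exact hdisj.left_le_of_le_sup_right (Finset.subset_union_left.trans h)

section Minor

variable {F G : flatsF M} (hFG : F ≤ G)

theorem coe_minorFlatsEmbedding (H : flatsF (mMinor M ↑G.1 ↑F.1)) :
    ((minorFlatsEmbedding hFG H).1 : Set (Fin m)) = ↑H.1 ∪ ↑F.1 :=
  Finset.coe_union _ _

theorem range_minorFlatsEmbedding : range (minorFlatsEmbedding hFG) = Icc F G := by
  have hiff {H : Finset (Fin m)} := isFlat_mMinor_iff (H := H) (isFlat_coe G)
    (Finset.coe_subset.2 hFG)
  ext K
  constructor
  · rintro ⟨H, rfl⟩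
    refine ⟨Finset.subset_union_right, Finset.coe_subset.1 ?_⟩
    rw [coe_minorFlatsEmbedding]
    exact (hiff.1 (isFlat_coe H)).1.2
  · rintro ⟨hFK, hKG⟩
    have hunion : K.1 \ F.1 ∪ F.1 = K.1 := Finset.sdiff_union_of_subset hFK
    refine ⟨⟨K.1 \ F.1, mem_flatsF.2 (hiff.2 ?_)⟩, Subtype.ext hunion⟩
    rw [← Finset.coe_union, hunion, Finset.disjoint_coe, Finset.coe_subset]
    exact ⟨⟨isFlat_coe K, hKG⟩, Finset.sdiff_disjoint⟩

theorem minorFlatsEmbedding_bot : minorFlatsEmbedding hFG ⊥ = F := by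
  obtain ⟨K, hK⟩ : F ∈ range (minorFlatsEmbedding hFG) :=
    range_minorFlatsEmbedding hFG ▸ left_mem_Icc.2 hFG
  exact le_antisymm (((minorFlatsEmbedding hFG).monotone bot_le).trans_eq hK)
    (range_minorFlatsEmbedding hFG ▸ mem_range_self ⊥ : _ ∈ Icc F G).1

theorem minorFlatsEmbedding_top : minorFlatsEmbedding hFG ⊤ = G := by
  obtain ⟨K, hK⟩ : G ∈ range (minorFlatsEmbedding hFG) :=
    range_minorFlatsEmbedding hFG ▸ right_mem_Icc.2 hFG
  exact le_antisymm (range_minorFlatsEmbedding hFG ▸ mem_range_self ⊤ : _ ∈ Icc F G).2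
    (hK.symm.trans_le ((minorFlatsEmbedding hFG).monotone le_top))

theorem flatRank_minorFlatsEmbedding (H : flatsF (mMinor M ↑G.1 ↑F.1)) :
    flatRank M (minorFlatsEmbedding hFG H) = flatRank _ H + flatRank M F := by
  have hHG : (H.1 ∪ F.1 : Set (Fin m)) ⊆ G.1 :=
    ((isFlat_mMinor_iff (isFlat_coe G) (Finset.coe_subset.2 hFG)).1 (isFlat_coe H)).1.2
  rw [flatRank, coe_minorFlatsEmbedding, ← rk_mMinor_add_rk hHG]
  exact Nat.cast_add _ _

include hFG in
theorem betaInv_mMinor :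
    betaInv (mMinor M ↑G.1 ↑F.1) =
      (-1) ^ (rk M ↑G.1 + rk M ↑F.1) * intervalBeta (flatRank M) F G := by
  have hsub : (F.1 : Set (Fin m)) ⊆ ↑G.1 := Finset.coe_subset.2 hFG
  have hrk : rk (mMinor M ↑G.1 ↑F.1) (mMinor M ↑G.1 ↑F.1).E + rk M ↑F.1 = rk M ↑G.1 := by
    have hground : (mMinor M ↑G.1 ↑F.1).E ∪ ↑F.1 = ↑G.1 := sdiff_union_of_subset hsub
    rw [rk_mMinor_add_rk hground.subset, hground]
  have hbeta := intervalBeta_orderEmbedding (minorFlatsEmbedding hFG)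
    (range_minorFlatsEmbedding hFG ▸ ordConnected_Icc) (flatRank_minorFlatsEmbedding hFG) ⊥ ⊤
  rw [minorFlatsEmbedding_bot, minorFlatsEmbedding_top] at hbeta
  rw [betaInv_eq_intervalBeta (mLoopless_mMinor (isFlat_coe G) (isFlat_coe F) hsub), ← hbeta,
    ← hrk, add_assoc, pow_add, Even.neg_one_pow ⟨_, rfl⟩, mul_one]

end Minor

theorem betaInv_restrict (hM : mLoopless M) (F : flatsF M) :
    betaInv (M ↾ ↑F.1) = (-1) ^ rk M ↑F.1 * intervalBeta (flatRank M) ⊥ F := by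
  have hminor : M ↾ ↑F.1 = mMinor M ↑F.1 ↑(⊥ : flatsF M).1 := by
    rw [coe_bot_flatsF hM, Finset.coe_empty]
    exact (contract_empty _).symm
  have hrk : rk M ↑(⊥ : flatsF M).1 = 0 := Nat.cast_eq_zero.1 (flatRank_bot hM)
  rw [hminor, betaInv_mMinor bot_le, hrk, add_zero]

theorem betaInv_mContr (F : flatsF M) :
    betaInv (mContr M ↑F.1) =
      (-1) ^ (rk M M.E + rk M ↑F.1) * intervalBeta (flatRank M) F ⊤ := by
  have hminor : mContr M ↑F.1 = mMinor M ↑(⊤ : flatsF M).1 ↑F.1 := by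
    rw [coe_top_flatsF, mMinor, restrict_ground_eq_self]
  rw [hminor, betaInv_mMinor le_top, coe_top_flatsF]

theorem betaInv_restrict_mul_betaInv_mContr (hM : mLoopless M) (F : flatsF M) :
    betaInv (M ↾ ↑F.1) * betaInv (mContr M ↑F.1) =
      (-1) ^ rk M M.E * (intervalBeta (flatRank M) ⊥ F * intervalBeta (flatRank M) F ⊤) := by
  rw [betaInv_restrict hM, betaInv_mContr, mul_mul_mul_comm, ← pow_add, add_left_comm, pow_add,
    Even.neg_one_pow (Even.add_self _), mul_one]

theorem betaInv_mContr_ground : betaInv (mContr M M.E) = 0 := by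
  have htop := betaInv_mContr (⊤ : flatsF M)
  rwa [coe_top_flatsF, intervalBeta_self, mul_zero] at htop

/-- Joining a flat with a fixed element `i`; the closed flats are those containing `i`. -/
noncomputable def joinElement {i : Fin m} (hi : i ∈ M.E) : ClosureOperator (flatsF M) :=
  have hsub (F : flatsF M) : insert i (F.1 : Set (Fin m)) ⊆ flatClosure M (insert i ↑F.1) := by
    rw [coe_flatClosure]
    exact M.subset_closure _ (insert_subset hi (isFlat_coe F).subset_ground)
  ClosureOperator.ofPred (fun F => flatClosure M (insert i ↑F.1)) (fun F => i ∈ F.1)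
    (fun F => Finset.coe_subset.1 ((subset_insert _ _).trans (hsub F)))
    (fun F => hsub F (mem_insert _ _))
    fun _ _ hFG hiG => flatClosure_le (insert_subset hiG hFG)

theorem joinElement_isClosed_iff {i : Fin m} (hi : i ∈ M.E) {F : flatsF M} :
    (joinElement hi).IsClosed F ↔ i ∈ F.1 :=
  Iff.rfl

theorem flatRank_joinElement {i : Fin m} (hi : i ∈ M.E) {F : flatsF M} (hF : i ∉ F.1) :
    flatRank M (joinElement hi F) = flatRank M F + 1 := by
  have hrk := rk_closure_insert (isFlat_coe F) hi hF
  rw [← coe_flatClosure] at hrk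
  exact (congrArg Nat.cast hrk).trans (Nat.cast_succ _)

theorem two_mul_sum_mem_betaInv_mul_betaInv (hM : mLoopless M) {i : Fin m} (hi : i ∈ M.E) :
    2 * ∑ F ∈ flatsF M with i ∈ F, betaInv (M ↾ ↑F) * betaInv (mContr M ↑F) =
      (-1) ^ rk M M.E *
        (∑ F : flatsF M, IncidenceAlgebra.mu ℤ ⊥ F * (flatRank M F ^ 2 + flatRank M F) -
          2 * (intervalBeta (flatRank M) ⊥ ⊤ * flatRank M ⊤)) := by
  have : DecidablePred (joinElement hi).IsClosed := fun F => Finset.decidableMem i F.1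
  have hbot : i ∉ (⊥ : flatsF M).1 := coe_bot_flatsF hM ▸ Finset.notMem_empty i
  have htop : i ∈ (⊤ : flatsF M).1 := by rwa [← Finset.mem_coe, coe_top_flatsF]
  have hcoord := two_mul_sum_isClosed_intervalBeta_mul_intervalBeta (c := joinElement hi)
    (r := flatRank M) hbot (fun _ _ hFG hF => hFG hF) (fun _ => flatRank_joinElement hi) htop
  rw [← Finset.Icc_bot, Finset.Icc_bot_top, Finset.sum_filter] at hcoord
  rw [← hcoord, Finset.sum_filter, ← Finset.sum_coe_sort]
  simp only [betaInv_restrict_mul_betaInv_mContr hM, ← mul_ite_zero, ← Finset.mul_sum,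
    joinElement_isClosed_iff]
  exact mul_left_comm (2 : ℤ) _ _

theorem sum_smul_eVec_apply (S : Finset (Finset (Fin m))) (E : Finset (Fin m))
    {a : Finset (Fin m) → ℤ} (ha : a E = 0) (i : Fin m) :
    (∑ F ∈ S with F ≠ ∅ ∧ F ≠ E, (a F : ℝ) • eVec F) i = (∑ F ∈ S with i ∈ F, a F : ℤ) := by
  rw [Finset.sum_apply, Finset.sum_filter, Finset.sum_filter, Int.cast_sum]
  refine Finset.sum_congr rfl fun F _ => ?_
  by_cases hiF : i ∈ F
  · rcases eq_or_ne F E with rfl | hF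
    · simp only [ne_eq, not_true_eq_false, and_false, if_false, ha, ite_self, Int.cast_zero]
    · simp [hiF, hF, Finset.ne_empty_of_mem hiF, eVec]
  · simp [hiF, eVec]

theorem csm_one_balanced_general (M : Matroid (Fin m)) {E : Finset (Fin m)} (hE : M.E = E)
    (hM : mLoopless M) :
    ∃ c : ℝ,
      ∑ F ∈ flatsF M with F ≠ ∅ ∧ F ≠ E,
        ((betaInv (M ↾ (↑F : Set (Fin m))) * betaInv (mContr M ↑F) : ℤ) : ℝ) • eVec F
        = c • eVec E := by
  have hground : betaInv (M ↾ (↑E : Set (Fin m))) * betaInv (mContr M ↑E) = 0 := by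
    rw [← hE, betaInv_mContr_ground, mul_zero]
  obtain ⟨K, hK⟩ : ∃ K : ℤ, ∀ i ∈ E,
      2 * ∑ F ∈ flatsF M with i ∈ F, betaInv (M ↾ ↑F) * betaInv (mContr M ↑F) = K :=
    ⟨_, fun i hi => two_mul_sum_mem_betaInv_mul_betaInv hM (hE ▸ hi)⟩
  refine ⟨2⁻¹ * K, funext fun i => ?_⟩
  rw [sum_smul_eVec_apply _ _ hground]
  by_cases hi : i ∈ E
  · rw [Pi.smul_apply, eVec, if_pos hi, smul_eq_mul, mul_one, ← hK i hi, Int.cast_mul,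
      Int.cast_two, inv_mul_cancel_left₀ two_ne_zero]
  · have hempty : {F ∈ flatsF M | i ∈ F} = ∅ := Finset.filter_false_of_mem fun F hF hiF =>
      hi (Finset.mem_coe.1 (hE ▸ (mem_flatsF.1 hF).subset_ground hiF))
    rw [hempty, Finset.sum_empty, Int.cast_zero, Pi.smul_apply, eVec, if_neg hi, smul_zero]

end Flats

/-- For a loopless matroid `M` on the ground set `{0,…,n}`, the vector
`∑_F β(M|F)·β(M/F)·e_F`, summed over all flats `F` with `∅ ≠ F ≠ E`, is a scalar
multiple of the all-ones vector `e_E`.  (Balancing of the first CSM cycle of `M`.) -/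
theorem csm_one_balanced {n : ℕ} (M : Matroid (Fin (n + 1)))
    (hE : M.E = Set.univ) (hM : mLoopless M) :
    ∃ c : ℝ,
      ∑ F ∈ (flatsF M).filter (fun F => F ≠ ∅ ∧ F ≠ Finset.univ),
        ((betaInv (M ↾ (↑F : Set (Fin (n + 1)))) * betaInv (mContr M ↑F) : ℤ) : ℝ) • eVec F
        = c • eVec (Finset.univ : Finset (Fin (n + 1))) :=
  csm_one_balanced_general M (hE.trans Finset.coe_univ.symm) hM
end

section
/- Let M be a matroid on the ground set E = {0,1,…,n} and let v ∈ ℝ^{n+1}. Let ∅ = S_0 ⊊ S_1 ⊊ ⋯ ⊊ S_ℓ ⊊ S_{ℓ+1} = E be the unique chain of subsets of E such that the coordinates of v are constant on each difference S_{j+1}∖S_j and the value of v on S_{j+1}∖S_j is strictly decreasing in j (equivalently, v lies in the relative interior of the cone cone(e_{S_1},…,e_{S_ℓ}) + ℝ·e_E). Then the face of the matroid polytope Q(M) maximizing the dot product with v satisfies face_v(Q(M)) = Q(M|S_1/S_0 ⊕ M|S_2/S_1 ⊕ ⋯ ⊕ M|S_{ℓ+1}/S_ℓ), the matroid polytope of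 the direct sum of the successive minors. -/
open Matroid Set

/-- The dot product of two vectors in `ℝ^m`. -/
def dotp {m : ℕ} (v x : Fin m → ℝ) : ℝ := ∑ i, x i * v i

/-- The face of a set `Q ⊆ ℝ^m` maximizing the dot product with `v`. -/
def faceV {m : ℕ} (v : Fin m → ℝ) (Q : Set (Fin m → ℝ)) : Set (Fin m → ℝ) :=
  {x ∈ Q | ∀ y ∈ Q, dotp v y ≤ dotp v x}

/-- The matroid polytope `Q(M)` of a matroid `M` on `{0,…,m-1}`: the convex hull of the
indicator vectors of the bases of `M`. -/
noncomputable def mPoly {m : ℕ} (M : Matroid (Fin m)) : Set (Fin m → ℝ) :=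
  convexHull ℝ {x | ∃ B : Finset (Fin m), M.IsBase ↑B ∧ x = eVec B}

/-!
Linear functionals are maximized over a convex hull exactly on the hull of the maximizing
generators, so only the bases of maximal weight matter. Summation by parts writes
`v = c_ℓ e_E + ∑ (c_j - c_{j+1}) e_{S_{j+1}}` with positive coefficients, so the weight of a base
`B` is a constant plus a positive combination of the numbers `|B ∩ S_j| ≤ r(S_j)`. All these bounds
are attained together, by gluing bases of the successive minors; hence `B` is optimal if and only
if it meets every `S_j` in a basis of `S_j`, i.e. if and only if it is itself glued from bases of
the minors.
-/

section Face

variable {𝕜 E β : Type*} [Semiring 𝕜] [PartialOrder 𝕜] [AddCommMonoid E] [Module 𝕜 E]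
  [AddCommMonoid β] [PartialOrder β] [IsOrderedCancelAddMonoid β] [Module 𝕜 β]
  [PosSMulStrictMono 𝕜 β] {f : E → β} {r : β}

lemma convex_setOf_lt_union (hf : IsLinearMap 𝕜 f) {s : Set E} (hs : Convex 𝕜 s)
    (hsr : ∀ x ∈ s, f x ≤ r) : Convex 𝕜 ({x | f x < r} ∪ s) := by
  rw [convex_iff_forall_pos]
  intro x hx y hy a b ha hb hab
  have hle : ∀ z ∈ {x | f x < r} ∪ s, f z ≤ r := fun z hz => hz.elim le_of_lt (hsr z)
  have hcombo : f (a • x + b • y) = a • f x + b • f y := by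
    rw [hf.map_add, hf.map_smul, hf.map_smul]
  have hr : a • r + b • r = r := Convex.combo_self hab r
  rcases hx with hxr | hxs
  · left
    calc f (a • x + b • y) = a • f x + b • f y := hcombo
      _ < a • r + b • r := add_lt_add_of_lt_of_le (smul_lt_smul_of_pos_left hxr ha)
          (smul_le_smul_of_nonneg_left (hle y hy) hb.le)
      _ = r := hr
  rcases hy with hyr | hys
  · left
    calc f (a • x + b • y) = a • f x + b • f y := hcombo
      _ < a • r + b • r := add_lt_add_of_le_of_lt (smul_le_smul_of_nonneg_left (hsr x hxs) ha.le)
          (smul_lt_smul_of_pos_left hyr hb)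
      _ = r := hr
  · exact Or.inr (hs hxs hys ha.le hb.le hab)

lemma sep_convexHull_eq_convexHull_sep (hf : IsLinearMap 𝕜 f) {V : Set E}
    (hV : ∀ x ∈ V, f x ≤ r) :
    {x ∈ convexHull 𝕜 V | f x = r} = convexHull 𝕜 {x ∈ V | f x = r} := by
  have hface : ∀ x ∈ convexHull 𝕜 {x ∈ V | f x = r}, f x = r := fun x hx =>
    convexHull_min (sep_subset_ofPred _ _) (convex_hyperplane hf r) hx
  refine Subset.antisymm (fun x hx => ?_) fun x hx =>
    ⟨convexHull_mono (sep_subset _ _) hx, hface x hx⟩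
  have hconv := convex_setOf_lt_union hf (convex_convexHull 𝕜 _) fun x hx => (hface x hx).le
  have hsub : V ⊆ {x | f x < r} ∪ convexHull 𝕜 {x ∈ V | f x = r} := fun y hy =>
    (hV y hy).lt_or_eq.imp_right fun h => subset_convexHull 𝕜 _ ⟨hy, h⟩
  exact (convexHull_min hsub hconv hx.1).resolve_left fun h => h.ne hx.2

end Face

lemma isLinearMap_dotp {m : ℕ} (v : Fin m → ℝ) : IsLinearMap ℝ (dotp v) :=
  (dotProductBilin ℝ ℝ).flip v |>.isLinear

lemma faceV_convexHull {m : ℕ} (v : Fin m → ℝ) {V : Set (Fin m → ℝ)} {x₀ : Fin m → ℝ}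
    (hx₀ : x₀ ∈ V) (hmax : ∀ y ∈ V, dotp v y ≤ dotp v x₀) :
    faceV v (convexHull ℝ V) = convexHull ℝ {x ∈ V | dotp v x = dotp v x₀} := by
  have hle : ∀ y ∈ convexHull ℝ V, dotp v y ≤ dotp v x₀ := fun y hy =>
    convexHull_min hmax (convex_halfSpace_le (isLinearMap_dotp v) _) hy
  rw [← sep_convexHull_eq_convexHull_sep (isLinearMap_dotp v) hmax]
  ext x
  refine and_congr_right fun hx => ⟨fun h => ?_, fun h y hy => (hle y hy).trans_eq h.symm⟩
  exact (hle x hx).antisymm (h x₀ (subset_convexHull ℝ V hx₀))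

section Minor

variable {α : Type*} {M : Matroid α} {F G I B X : Set α}

lemma isBase_contract_iff_of_isBasis (hI : M.IsBasis I X) :
    (M ／ X).IsBase B ↔ M.IsBase (B ∪ I) ∧ Disjoint X B := by
  have hspan : (M ／ X).closure B = (M ／ X).E ↔ M.closure (B ∪ I) = M.E := by
    rw [contract_closure_eq, contract_ground,
      closure_union_congr_right hI.closure_eq_closure]
    have hX : X ⊆ M.closure (B ∪ X) :=
      (M.subset_closure X).trans (M.closure_subset_closure subset_union_right)
    refine ⟨fun h => ?_, congrArg (· \ X)⟩
    rw [← sdiff_union_of_subset hX, h, sdiff_union_of_subset hI.subset_ground]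
  rw [isBase_iff_indep_closure_eq, isBase_iff_indep_closure_eq, hI.contract_indep_iff, hspan]
  tauto

lemma isBase_mMinor_iff (hFG : F ⊆ G) (hG : G ⊆ M.E) (hI : M.IsBasis I F) :
    (mMinor M G F).IsBase B ↔ M.IsBasis (B ∪ I) G ∧ Disjoint F B := by
  -- `mContr` unfolds to Mathlib's contraction.
  change ((M ↾ G) ／ F).IsBase B ↔ _
  rw [isBase_contract_iff_of_isBasis (hI.isBasis_restrict_of_subset hFG), isBase_restrict_iff hG]

lemma isBase_mMinor_inter_sdiff {U : Set α} (hFG : F ⊆ G) (hF : M.IsBasis (U ∩ F) F)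
    (hG : M.IsBasis (U ∩ G) G) : (mMinor M G F).IsBase (U ∩ (G \ F)) := by
  rw [isBase_mMinor_iff hFG hG.subset_ground hF, ← inter_union_distrib_left,
    sdiff_union_of_subset hFG]
  exact ⟨hG, disjoint_sdiff_right.mono_right inter_subset_right⟩

end Minor

section Chain

variable {α : Type*} {M : Matroid α} {k : ℕ} {S : Fin (k + 1) → Set α}

lemma last_subset_iUnion_succ_sdiff_castSucc (h0 : S 0 = ∅) :
    S (Fin.last k) ⊆ ⋃ j : Fin k, S j.succ \ S j.castSucc := by
  intro e he
  by_contra! h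
  have hnotMem : ∀ t, e ∉ S t := by
    intro t
    induction t using Fin.induction with
    | zero => simp [h0]
    | succ j ih => exact fun hj => h (mem_iUnion.2 ⟨j, hj, ih⟩)
  exact hnotMem _ he

lemma iUnion_inter_succ_of_chain (hS : Monotone S) {B : Fin k → Set α}
    (hB : ∀ j, B j ⊆ S j.succ \ S j.castSucc) (j : Fin k) :
    (⋃ s, B s) ∩ S j.succ = B j ∪ (⋃ s, B s) ∩ S j.castSucc := by
  refine Subset.antisymm (fun e he => ?_) (union_subset ?_ ?_)
  · obtain ⟨heB, hej⟩ := he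
    obtain ⟨s, hes⟩ := mem_iUnion.1 heB
    rcases lt_trichotomy s j with hsj | rfl | hjs
    · exact Or.inr ⟨heB, hS (Fin.succ_le_castSucc_iff.2 hsj) (hB s hes).1⟩
    · exact Or.inl hes
    · exact absurd (hS (Fin.succ_le_castSucc_iff.2 hjs) hej) (hB s hes).2
  · exact subset_inter (subset_iUnion B j) ((hB j).trans sdiff_subset)
  · exact inter_subset_inter_right _ (hS (Fin.castSucc_le_succ j))

lemma isBasis_iUnion_inter (hS : Monotone S) (h0 : S 0 = ∅) (hE : ∀ t, S t ⊆ M.E)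
    {B : Fin k → Set α}
    (hB : ∀ j, (mMinor M (S j.succ) (S j.castSucc)).IsBase (B j)) (t : Fin (k + 1)) :
    M.IsBasis ((⋃ j, B j) ∩ S t) (S t) := by
  induction t using Fin.induction with
  | zero => simp [h0]
  | succ j ih =>
    rw [iUnion_inter_succ_of_chain hS (fun s => (hB s).subset_ground) j]
    exact ((isBase_mMinor_iff (hS (Fin.castSucc_le_succ j)) (hE _) ih).1 (hB j)).1

lemma exists_isBase_mMinor_iUnion_eq_iff {U : Set α} (hS : Monotone S) (h0 : S 0 = ∅)
    (hlast : S (Fin.last k) = M.E) :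
    (∃ B : Fin k → Set α,
      (∀ j, (mMinor M (S j.succ) (S j.castSucc)).IsBase (B j)) ∧ U = ⋃ j, B j) ↔
      M.IsBase U ∧ ∀ t, M.IsBasis (U ∩ S t) (S t) := by
  have hE : ∀ t, S t ⊆ M.E := fun t => hlast ▸ hS (Fin.le_last t)
  constructor
  · rintro ⟨B, hB, rfl⟩
    have hU := isBasis_iUnion_inter hS h0 hE hB
    have hUE : ⋃ j, B j ⊆ M.E :=
      iUnion_subset fun j => (hB j).subset_ground.trans (sdiff_subset.trans (hE j.succ))
    have hbase := hU (Fin.last k)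
    rw [hlast, inter_eq_self_of_subset_left hUE, isBasis_ground_iff] at hbase
    exact ⟨hbase, hU⟩
  · rintro ⟨hU, hUS⟩
    refine ⟨fun j => U ∩ (S j.succ \ S j.castSucc), fun j =>
      isBase_mMinor_inter_sdiff (hS (Fin.castSucc_le_succ j)) (hUS _) (hUS _), ?_⟩
    rw [← inter_iUnion, eq_comm, inter_eq_left]
    exact hU.subset_ground.trans (hlast ▸ last_subset_iUnion_succ_sdiff_castSucc h0)

lemma forall_isBasis_inter_iff_interior {S : Fin (k + 2) → Set α} {U : Set α} (h0 : S 0 = ∅)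
    (hlast : S (Fin.last (k + 1)) = M.E) (hU : M.IsBase U) :
    (∀ t, M.IsBasis (U ∩ S t) (S t)) ↔
      ∀ j : Fin k, M.IsBasis (U ∩ S j.castSucc.succ) (S j.castSucc.succ) := by
  rw [Fin.forall_fin_succ, Fin.forall_fin_succ', Fin.succ_last, hlast, h0,
    inter_eq_self_of_subset_left hU.subset_ground]
  simp [hU]

lemma exists_isBase_mMinor_biUnion_eq_iff [DecidableEq α] {S : Fin (k + 2) → Finset α}
    {U : Finset α} (hS : Monotone S) (h0 : S 0 = ∅) (hlast : ↑(S (Fin.last (k + 1))) = M.E) :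
    (∃ B : Fin (k + 1) → Finset α,
      (∀ j, (mMinor M ↑(S j.succ) ↑(S j.castSucc)).IsBase ↑(B j)) ∧
        U = Finset.univ.biUnion B) ↔
      M.IsBase ↑U ∧ ∀ j : Fin k, M.IsBasis ↑(U ∩ S j.castSucc.succ) ↑(S j.castSucc.succ) := by
  have hcoe0 : (S 0 : Set α) = ∅ := by simp [h0]
  have hcoe : Monotone fun t => (S t : Set α) := fun _ _ hst => Finset.coe_subset.2 (hS hst)
  have hsets := (exists_isBase_mMinor_iUnion_eq_iff (U := ↑U) hcoe hcoe0 hlast).trans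
    (and_congr_right (forall_isBasis_inter_iff_interior hcoe0 hlast))
  simp only [Finset.coe_inter]
  refine Iff.trans ⟨?_, ?_⟩ hsets
  · rintro ⟨B, hB, rfl⟩
    exact ⟨fun j => ↑(B j), hB, by simp⟩
  · rintro ⟨B, hB, hU⟩
    lift B to Fin (k + 1) → Finset α using
      fun j => U.finite_toSet.subset (hU ▸ subset_iUnion B j)
    exact ⟨B, hB, by simpa [← Finset.coe_inj] using hU⟩

end Chain

section Card

variable {α : Type*} {M : Matroid α} {B I X : Finset α}

lemma card_eq_card_of_isBase (hB : M.IsBase ↑B) (hI : M.IsBase ↑I) : B.card = I.card := by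
  simpa [encard_coe_eq_coe_finsetCard] using hB.encard_eq_encard_of_isBase hI

variable [DecidableEq α]

lemma card_inter_le_card_of_isBasis (hB : M.Indep ↑B) (hI : M.IsBasis ↑I ↑X) :
    (B ∩ X).card ≤ I.card := by
  have h : (B ∩ X : Set α).encard ≤ M.eRk X :=
    (hB.inter_right X).encard_le_eRk_of_subset inter_subset_right
  rwa [← hI.encard_eq_eRk, ← Finset.coe_inter, encard_coe_eq_coe_finsetCard,
    encard_coe_eq_coe_finsetCard, Nat.cast_le] at h

lemma mul_card_inter_le_of_isBasis {w : ℝ} (hw : 0 ≤ w) (hB : M.Indep ↑B)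
    (hI : M.IsBasis ↑I ↑X) : w * (B ∩ X).card ≤ w * I.card :=
  mul_le_mul_of_nonneg_left (Nat.cast_le.2 (card_inter_le_card_of_isBasis hB hI)) hw

lemma card_inter_eq_card_iff_isBasis (hB : M.Indep ↑B) (hI : M.IsBasis ↑I ↑X) :
    (B ∩ X).card = I.card ↔ M.IsBasis ↑(B ∩ X) ↑X := by
  have hBX : M.Indep ↑(B ∩ X) := hB.subset (Finset.coe_subset.2 Finset.inter_subset_left)
  rw [isBasis_iff_indep_encard_eq_of_finite (B ∩ X).finite_toSet hI.subset_ground,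
    ← hI.encard_eq_eRk, encard_coe_eq_coe_finsetCard, encard_coe_eq_coe_finsetCard, Nat.cast_inj]
  exact ⟨fun h => ⟨Finset.coe_subset.2 Finset.inter_subset_right, hBX, h⟩, fun h => h.2.2⟩

end Card

section ConeVec

variable {ι : Type*} [Fintype ι] {m : ℕ}

/-- The vector `a e_E + ∑ i, w i e_{S i}`. When the weights `w i` are positive and the sets `S i`
form a chain, these are the points of the relative interior of `cone(e_{S i}) + ℝ e_E`. -/
def coneVec (a : ℝ) (w : ι → ℝ) (S : ι → Finset (Fin m)) : Fin m → ℝ :=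
  fun e => a + ∑ i, w i * eVec (S i) e

lemma dotp_coneVec_eVec (a : ℝ) (w : ι → ℝ) (S : ι → Finset (Fin m)) (B : Finset (Fin m)) :
    dotp (coneVec a w S) (eVec B) = a * B.card + ∑ i, w i * (B ∩ S i).card := by
  have hterm : ∀ i, ∑ e ∈ B, w i * eVec (S i) e = w i * (B ∩ S i).card := fun i => by
    simp [eVec, mul_comm]
  calc dotp (coneVec a w S) (eVec B) = ∑ e ∈ B, (a + ∑ i, w i * eVec (S i) e) := by
        simp [dotp, coneVec, eVec]
    _ = a * B.card + ∑ i, w i * (B ∩ S i).card := by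
        rw [Finset.sum_add_distrib, Finset.sum_comm, Finset.sum_const, nsmul_eq_mul, mul_comm]
        simp only [hterm]

lemma eq_coneVec_of_chain {k : ℕ} {S : Fin (k + 2) → Finset (Fin m)} (hS : Monotone S)
    (h0 : S 0 = ∅) {v : Fin m → ℝ} {c : Fin (k + 1) → ℝ}
    (hv : ∀ j : Fin (k + 1), ∀ i ∈ S j.succ \ S j.castSucc, v i = c j) {e : Fin m}
    (he : e ∈ S (Fin.last (k + 1))) :
    v e = coneVec (c (Fin.last k)) (fun j : Fin k => c j.castSucc - c j.succ)
      (fun j => S j.castSucc.succ) e := by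
  induction k with
  | zero => simpa [coneVec] using hv 0 e (by simpa [h0] using he)
  | succ k ih =>
    by_cases hek : e ∈ S (Fin.last (k + 1)).castSucc
    · have h := ih (S := fun t => S t.castSucc) (c := fun j => c j.castSucc)
        (hS.comp Fin.strictMono_castSucc.monotone) h0 (fun j => hv j.castSucc) hek
      rw [h]
      simp only [coneVec, Fin.sum_univ_castSucc, Fin.succ_castSucc, Fin.succ_last, eVec, hek,
        if_true]
      ring
    · have hnot : ∀ j : Fin (k + 1), e ∉ S j.castSucc.succ := fun j hj =>
        hek (hS (Fin.succ_le_castSucc_iff.2 (Fin.castSucc_lt_last j)) hj)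
      simpa [coneVec, eVec, hnot] using hv (Fin.last _) e (Finset.mem_sdiff.2 ⟨he, hek⟩)

variable {M : Matroid (Fin m)} {S : ι → Finset (Fin m)} {w : ι → ℝ} {B U : Finset (Fin m)}

lemma dotp_coneVec_le (a : ℝ) (hw : ∀ i, 0 ≤ w i) (hU : M.IsBase ↑U)
    (hUS : ∀ i, M.IsBasis ↑(U ∩ S i) ↑(S i)) (hB : M.IsBase ↑B) :
    dotp (coneVec a w S) (eVec B) ≤ dotp (coneVec a w S) (eVec U) := by
  rw [dotp_coneVec_eVec, dotp_coneVec_eVec, card_eq_card_of_isBase hB hU, add_le_add_iff_left]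
  exact Finset.sum_le_sum fun i _ => mul_card_inter_le_of_isBasis (hw i) hB.indep (hUS i)

lemma dotp_coneVec_eq_iff (a : ℝ) (hw : ∀ i, 0 < w i) (hU : M.IsBase ↑U)
    (hUS : ∀ i, M.IsBasis ↑(U ∩ S i) ↑(S i)) (hB : M.IsBase ↑B) :
    dotp (coneVec a w S) (eVec B) = dotp (coneVec a w S) (eVec U) ↔
      ∀ i, M.IsBasis ↑(B ∩ S i) ↑(S i) := by
  rw [dotp_coneVec_eVec, dotp_coneVec_eVec, card_eq_card_of_isBase hB hU, add_right_inj,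
    Finset.sum_eq_sum_iff_of_le fun i _ =>
      mul_card_inter_le_of_isBasis (hw i).le hB.indep (hUS i)]
  refine forall_congr' fun i => ?_
  rw [← card_inter_eq_card_iff_isBasis hB.indep (hUS i), mul_right_inj' (hw i).ne', Nat.cast_inj,
    imp_iff_right (Finset.mem_univ i)]

lemma faceV_coneVec_mPoly (a : ℝ) (hw : ∀ i, 0 < w i) (hU : M.IsBase ↑U)
    (hUS : ∀ i, M.IsBasis ↑(U ∩ S i) ↑(S i)) :
    faceV (coneVec a w S) (mPoly M) = convexHull ℝ {x | ∃ B : Finset (Fin m),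
      (M.IsBase ↑B ∧ ∀ i, M.IsBasis ↑(B ∩ S i) ↑(S i)) ∧ x = eVec B} := by
  have hmax : ∀ y ∈ {x | ∃ B : Finset (Fin m), M.IsBase ↑B ∧ x = eVec B},
      dotp (coneVec a w S) y ≤ dotp (coneVec a w S) (eVec U) := by
    rintro _ ⟨B, hB, rfl⟩
    exact dotp_coneVec_le a (fun i => (hw i).le) hU hUS hB
  have hUmem : eVec U ∈ {x | ∃ B : Finset (Fin m), M.IsBase ↑B ∧ x = eVec B} := ⟨U, hU, rfl⟩
  rw [mPoly, faceV_convexHull _ hUmem hmax]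
  congr 1
  ext x
  constructor
  · rintro ⟨⟨B, hB, rfl⟩, hx⟩
    exact ⟨B, ⟨hB, (dotp_coneVec_eq_iff a hw hU hUS hB).1 hx⟩, rfl⟩
  · rintro ⟨B, ⟨hB, hBS⟩, rfl⟩
    exact ⟨⟨B, hB, rfl⟩, (dotp_coneVec_eq_iff a hw hU hUS hB).2 hBS⟩

end ConeVec

/-- Let `M` be a matroid on `{0,…,n}` and `v ∈ ℝ^{n+1}`.  Let
`∅ = S₀ ⊊ S₁ ⊊ ⋯ ⊊ S_ℓ ⊊ S_{ℓ+1} = E` be the chain of subsets such that `v` is constant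
on each difference `S_{j+1}∖S_j`, with strictly decreasing values.  Then the face of the
matroid polytope `Q(M)` maximizing the dot product with `v` is the matroid polytope of the
direct sum `M|S₁/S₀ ⊕ ⋯ ⊕ M|S_{ℓ+1}/S_ℓ`, whose bases are the unions of bases of the
successive minors. -/
theorem face_of_matroid_polytope {n ℓ : ℕ} (M : Matroid (Fin (n + 1)))
    (hE : M.E = Set.univ) (v : Fin (n + 1) → ℝ)
    (Sc : Fin (ℓ + 2) → Finset (Fin (n + 1)))
    (hmono : StrictMono Sc) (h0 : Sc 0 = ∅) (hlast : Sc (Fin.last (ℓ + 1)) = Finset.univ)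
    (c : Fin (ℓ + 1) → ℝ) (hc : StrictAnti c)
    (hv : ∀ j : Fin (ℓ + 1), ∀ i ∈ Sc j.succ \ Sc j.castSucc, v i = c j) :
    faceV v (mPoly M) =
      convexHull ℝ {x | ∃ B : Fin (ℓ + 1) → Finset (Fin (n + 1)),
        (∀ j, (mMinor M ↑(Sc j.succ) ↑(Sc j.castSucc)).IsBase ↑(B j)) ∧
        x = eVec (Finset.univ.biUnion B)} := by
  have hbases := fun U => exists_isBase_mMinor_biUnion_eq_iff (U := U) hmono.monotone h0
    (by simp [hlast, hE] : ↑(Sc (Fin.last (ℓ + 1))) = M.E)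
  choose C hC using fun j : Fin (ℓ + 1) => (mMinor M ↑(Sc j.succ) ↑(Sc j.castSucc)).exists_isBase
  lift C to Fin (ℓ + 1) → Finset (Fin (n + 1)) using fun j => (C j).toFinite
  obtain ⟨hU, hUS⟩ := (hbases _).1 ⟨C, hC, rfl⟩
  have hv_cone : v = coneVec (c (Fin.last ℓ)) (fun j : Fin ℓ => c j.castSucc - c j.succ)
      (fun j => Sc j.castSucc.succ) :=
    funext fun e => eq_coneVec_of_chain hmono.monotone h0 hv (by simp [hlast])
  have hw : ∀ j : Fin ℓ, 0 < c j.castSucc - c j.succ := fun j =>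
    sub_pos.2 (hc Fin.castSucc_lt_succ)
  rw [hv_cone, faceV_coneVec_mPoly _ hw hU hUS]
  congr 1
  ext x
  simp only [← hbases, mem_ofPred_eq]
  constructor
  · rintro ⟨_, ⟨B, hB, rfl⟩, rfl⟩
    exact ⟨B, hB, rfl⟩
  · rintro ⟨B, hB, rfl⟩
    exact ⟨_, ⟨B, hB, rfl⟩, rfl⟩
end
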